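/- Let (X,d) be a metric space, let φ_n : X → X (n ≥ 1) be a sequence of continuous maps such that the family {φ_n : n ≥ 1} is uniformly equicontinuous, and let k ≥ 1. Then (X, φ_{1,∞}) is ℵ₀-expansive if and only if its k-th iterate system (φ_{1,∞})^k is ℵ₀-expansive. -/

import Mathlib

open Set Metric Filter Topology

/-- `phiComp φ n = φ_n ∘ ⋯ ∘ φ_1` (with `phiComp φ 0 = id`), the compositions of the
non-autonomous system `φ_{1,∞}` given by the maps `φ 1, φ 2, …` (`φ 0` is unused). -/
def phiComp {X : Type*} (φ : ℕ → X → X) : ℕ → X → X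
  | 0 => id
  | n + 1 => φ (n + 1) ∘ phiComp φ n

/-- For a system of homeomorphisms, `phiCompH φ n = φ_n ∘ ⋯ ∘ φ_1` as a homeomorphism. -/
def phiCompH {X : Type*} [TopologicalSpace X] (φ : ℕ → X ≃ₜ X) : ℕ → X ≃ₜ X
  | 0 => Homeomorph.refl X
  | n + 1 => (phiCompH φ n).trans (φ (n + 1))

/-- Two-sided compositions: `phiZ φ i = φ₁^i` for `i ≥ 0` and `φ₁^i = (φ₁^{|i|})⁻¹` for `i < 0`. -/
def phiZ {X : Type*} [TopologicalSpace X] (φ : ℕ → X ≃ₜ X) (i : ℤ) : X → X :=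
  if 0 ≤ i then ⇑(phiCompH φ i.toNat) else ⇑(phiCompH φ (-i).toNat).symm

/-- `segComp φ a m = φ_{a+m} ∘ ⋯ ∘ φ_{a+1}`. -/
def segComp {X : Type*} (φ : ℕ → X → X) (a : ℕ) : ℕ → X → X
  | 0 => id
  | m + 1 => φ (a + m + 1) ∘ segComp φ a m

/-- The `k`-th iterate system `(φ_{1,∞})^k`: its `n`-th map is
`φ_{nk} ∘ ⋯ ∘ φ_{(n-1)k+1}`. -/
def iterateSys {X : Type*} (φ : ℕ → X → X) (k : ℕ) : ℕ → X → X :=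
  fun n => segComp φ ((n - 1) * k) k

/-- `(X, φ_{1,∞})` is `n₀`-expansive (one-sided). -/
def IsNExpansive {X : Type*} [MetricSpace X] (φ : ℕ → X → X) (n₀ : ℕ) : Prop :=
  ∃ c > (0 : ℝ), ∀ x : X,
    {y : X | ∀ i : ℕ, dist (phiComp φ i x) (phiComp φ i y) ≤ c}.encard ≤ (n₀ : ℕ∞)

/-- `(X, φ_{1,∞})` is ℵ₀-expansive (one-sided). -/
def IsAleph0Expansive {X : Type*} [MetricSpace X] (φ : ℕ → X → X) : Prop :=
  ∃ c > (0 : ℝ), ∀ x : X,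
    {y : X | ∀ i : ℕ, dist (phiComp φ i x) (phiComp φ i y) ≤ c}.Countable

/-- `(X, φ_{1,∞})` is `n₀`-expansive in the two-sided sense. -/
def IsNExpansiveZ {X : Type*} [MetricSpace X] (φ : ℕ → X ≃ₜ X) (n₀ : ℕ) : Prop :=
  ∃ c > (0 : ℝ), ∀ x : X,
    {y : X | ∀ i : ℤ, dist (phiZ φ i x) (phiZ φ i y) ≤ c}.encard ≤ (n₀ : ℕ∞)

/-- `(X, φ_{1,∞})` is ℵ₀-expansive in the two-sided sense. -/
def IsAleph0ExpansiveZ {X : Type*} [MetricSpace X] (φ : ℕ → X ≃ₜ X) : Prop :=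
  ∃ c > (0 : ℝ), ∀ x : X,
    {y : X | ∀ i : ℤ, dist (phiZ φ i x) (phiZ φ i y) ≤ c}.Countable

/-- `(X, φ_{1,∞})` is continuum-wise expansive. -/
def IsCwExpansive {X : Type*} [MetricSpace X] (φ : ℕ → X → X) : Prop :=
  ∃ c > (0 : ℝ), ∀ C : Set X, IsCompact C → IsConnected C → C.Nontrivial →
    ∃ n : ℕ, c < Metric.diam (phiComp φ n '' C)

/-- `(X, φ_{1,∞})` is meagre-expansive (one-sided). -/
def IsMeagreExpansive {X : Type*} [MetricSpace X] (φ : ℕ → X → X) : Prop :=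
  ∃ c > (0 : ℝ), ∀ x : X,
    IsNowhereDense {y : X | ∀ i : ℕ, dist (phiComp φ i x) (phiComp φ i y) ≤ c}

/-!
Since `φ₁^{qk + r}` is `φ₁^{qk}` followed by a composition of `r < k` consecutive maps, and such
short compositions again form a uniformly equicontinuous family, closeness of two orbits at the
multiples of `k` controls their distance at all times. Hence every dynamical ball of `φ_{1,∞}`
contains a dynamical ball of the iterate system with the same centre, of a radius independent of the
centre; conversely, passing to the iterate system only enlarges dynamical balls.
-/

section Compositions

variable {X : Type*} (φ : ℕ → X → X)

theorem phiComp_add (a j : ℕ) : phiComp φ (a + j) = segComp φ a j ∘ phiComp φ a := by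
  induction j with
  | zero => rfl
  | succ j ih => exact congrArg (φ (a + j + 1) ∘ ·) ih

theorem phiComp_iterateSys (k n : ℕ) : phiComp (iterateSys φ k) n = phiComp φ (n * k) := by
  induction n with
  | zero => rw [Nat.zero_mul]; rfl
  | succ n ih =>
    calc phiComp (iterateSys φ k) (n + 1)
        = segComp φ (n * k) k ∘ phiComp (iterateSys φ k) n := rfl
      _ = phiComp φ ((n + 1) * k) := by rw [ih, ← phiComp_add, Nat.succ_mul]

theorem phiComp_eq_segComp_comp_iterateSys (k i : ℕ) :
    phiComp φ i = segComp φ (i / k * k) (i % k) ∘ phiComp (iterateSys φ k) (i / k) := by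
  rw [phiComp_iterateSys, ← phiComp_add, Nat.div_add_mod']

end Compositions

section Equicontinuity

theorem uniformEquicontinuous_comp {ι X Y Z : Type*} [UniformSpace X] [UniformSpace Y]
    [UniformSpace Z] {F : ι → Y → Z} {G : ι → X → Y} (hF : UniformEquicontinuous F)
    (hG : UniformEquicontinuous G) : UniformEquicontinuous fun i => F i ∘ G i := by
  intro U hU
  filter_upwards [hG _ (hF U hU)] with p hp i using hp i i

theorem uniformEquicontinuous_prod_of_finite {ι κ X Y : Type*} [Finite κ] [UniformSpace X]
    [UniformSpace Y] {F : ι → κ → X → Y} (hF : ∀ j, UniformEquicontinuous fun i => F i j) :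
    UniformEquicontinuous fun p : ι × κ => F p.1 p.2 := by
  intro U hU
  filter_upwards [eventually_all.2 fun j => hF j U hU] with q hq p using hq p.2 p.1

theorem uniformEquicontinuous_segComp {X : Type*} [UniformSpace X] {φ : ℕ → X → X}
    (hφ : UniformEquicontinuous fun n => φ (n + 1)) (m : ℕ) :
    UniformEquicontinuous fun a => segComp φ a m := by
  induction m with
  | zero => exact fun U hU => mem_of_superset hU fun _ hp _ => hp
  | succ m ih => exact uniformEquicontinuous_comp (hφ.comp (· + m)) ih

theorem uniformEquicontinuous_iff_dist_le {ι X Y : Type*} [PseudoMetricSpace X]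
    [PseudoMetricSpace Y] {F : ι → X → Y} :
    UniformEquicontinuous F ↔ ∀ ε > 0, ∃ δ > 0, ∀ x y,
      dist x y ≤ δ → ∀ i, dist (F i x) (F i y) ≤ ε :=
  uniformity_basis_dist_le.uniformEquicontinuous_iff uniformity_basis_dist_le

end Equicontinuity

section DynamicalBalls

/-- The dynamical ball of radius `c` about `x`: the points whose orbit under `φ_{1,∞}` stays within
`c` of the orbit of `x`. The various notions of expansiveness ask for these sets to be small. -/
def dynamicalBall {X : Type*} [PseudoMetricSpace X] (φ : ℕ → X → X) (c : ℝ) (x : X) : Set X :=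
  {y | ∀ i : ℕ, dist (phiComp φ i x) (phiComp φ i y) ≤ c}

theorem dynamicalBall_subset_iterateSys {X : Type*} [PseudoMetricSpace X] (φ : ℕ → X → X) (k : ℕ)
    (c : ℝ) (x : X) : dynamicalBall φ c x ⊆ dynamicalBall (iterateSys φ k) c x := by
  intro y hy i
  rw [phiComp_iterateSys]
  exact hy (i * k)

theorem exists_dynamicalBall_iterateSys_subset {X : Type*} [PseudoMetricSpace X] {φ : ℕ → X → X}
    (hφ : UniformEquicontinuous fun n => φ (n + 1)) {k : ℕ} (hk : 0 < k) {c : ℝ} (hc : 0 < c) :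
    ∃ δ > 0, ∀ x, dynamicalBall (iterateSys φ k) δ x ⊆ dynamicalBall φ c x := by
  have h_seg : UniformEquicontinuous fun p : ℕ × Fin k => segComp φ p.1 p.2 :=
    uniformEquicontinuous_prod_of_finite (F := fun a (r : Fin k) => segComp φ a r)
      fun r => uniformEquicontinuous_segComp hφ r
  obtain ⟨δ, hδ, h_close⟩ := uniformEquicontinuous_iff_dist_le.1 h_seg c hc
  refine ⟨δ, hδ, fun x y hy i => ?_⟩
  rw [phiComp_eq_segComp_comp_iterateSys φ k i]
  exact h_close _ _ (hy (i / k)) (i / k * k, ⟨i % k, Nat.mod_lt i hk⟩)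

theorem IsAleph0Expansive.of_dynamicalBall_subset {X : Type*} [MetricSpace X] {φ ψ : ℕ → X → X}
    (hφ : IsAleph0Expansive φ)
    (h : ∀ c > 0, ∃ δ > 0, ∀ x, dynamicalBall ψ δ x ⊆ dynamicalBall φ c x) :
    IsAleph0Expansive ψ := by
  obtain ⟨c, hc, h_countable⟩ := hφ
  obtain ⟨δ, hδ, h_subset⟩ := h c hc
  exact ⟨δ, hδ, fun x => (h_countable x).mono (h_subset x)⟩

end DynamicalBalls

/-- For a uniformly equicontinuous family `{φ_n}` and `k ≥ 1`,
`φ_{1,∞}` is ℵ₀-expansive iff `(φ_{1,∞})^k` is ℵ₀-expansive. -/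
theorem stmt5 {X : Type*} [MetricSpace X] (φ : ℕ → X → X)
    (hφ : ∀ n, 1 ≤ n → Continuous (φ n))
    (hequi : ∀ ε > (0 : ℝ), ∃ δ > (0 : ℝ), ∀ n, 1 ≤ n → ∀ x y : X,
      dist x y ≤ δ → dist (φ n x) (φ n y) ≤ ε)
    (k : ℕ) (hk : 1 ≤ k) :
    IsAleph0Expansive φ ↔ IsAleph0Expansive (iterateSys φ k) := by
  have h_equi : UniformEquicontinuous fun n => φ (n + 1) := by
    refine uniformEquicontinuous_iff_dist_le.2 fun ε hε => ?_
    obtain ⟨δ, hδ, h_close⟩ := hequi ε hε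
    exact ⟨δ, hδ, fun x y hxy n => h_close (n + 1) n.succ_pos x y hxy⟩
  constructor
  · intro h
    exact h.of_dynamicalBall_subset fun _ hc => exists_dynamicalBall_iterateSys_subset h_equi hk hc
  · intro h
    exact h.of_dynamicalBall_subset fun c hc =>
      ⟨c, hc, dynamicalBall_subset_iterateSys φ k c⟩
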